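/- arXiv:2510.24312 — 2 statements merged into one kernel-verified Lean document; each statement's English description precedes it below -/
import Mathlib

section
/- Let n and k be positive integers. The equation (n‼)^k − n^(k‼) = (k‼)^n − k^(n‼) holds if and only if k = n or (k,n) is one of (1,2), (2,1), (1,3), (3,1), (2,3), (3,2). -/
open Nat

/-!
Moving the negative terms across gives `n‼ ^ k + k ^ n‼ = k‼ ^ n + n ^ k‼`, which is symmetric in
`n` and `k`. For `k < n` and `4 ≤ n` the left side is strictly larger.

For `k ≤ 2` this is because `k‼ = k` and `n < n‼`. For `3 ≤ k` the term `k ^ n‼` alone dominates,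
since it is at least `k` times each summand on the right: `n‼ = n * (n - 2)‼` writes it as
`(k ^ n) ^ (n - 2)‼`, to be compared with `n ^ k‼ = (n ^ k) ^ (k - 2)‼`, where `n ^ k ≤ k ^ n`
(as `log x / x` decreases on `[e, ∞)`) and `(k - 2)‼ < (n - 2)‼`, and with
`k‼ ^ n ≤ (k ^ n) ^ (k - 2)`, where `k - 2 < n - 2 ≤ (n - 2)‼`.
-/

lemma rpow_le_rpow_swap_of_exp_one_le {x y : ℝ} (hx : Real.exp 1 ≤ x) (hxy : x ≤ y) :
    y ^ x ≤ x ^ y := by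
  have hx₀ : 0 < x := (Real.exp_pos 1).trans_le hx
  have hy₀ : 0 < y := hx₀.trans_le hxy
  have hlog : Real.log y / y ≤ Real.log x / x :=
    Real.log_div_self_antitoneOn hx (hx.trans hxy) hxy
  rw [div_le_div_iff₀ hy₀ hx₀] at hlog
  rwa [← Real.log_le_log_iff (by positivity) (by positivity), Real.log_rpow hy₀,
    Real.log_rpow hx₀, mul_comm x, mul_comm y]

lemma pow_le_pow_swap_of_three_le {a b : ℕ} (ha : 3 ≤ a) (hab : a ≤ b) : b ^ a ≤ a ^ b := by
  have hexp : Real.exp 1 ≤ a := Real.exp_one_lt_three.le.trans (by exact_mod_cast ha)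
  exact_mod_cast rpow_le_rpow_swap_of_exp_one_le hexp (Nat.cast_le.2 hab)

lemma doubleFactorial_succ_lt_doubleFactorial_add_two : ∀ n : ℕ, (n + 1)‼ < (n + 2)‼
  | 0 => by decide
  | 1 => by decide
  | n + 2 =>
    Nat.mul_lt_mul'' (lt_succ_self (n + 3)) (doubleFactorial_succ_lt_doubleFactorial_add_two n)

lemma strictMono_doubleFactorial_succ : StrictMono fun n : ℕ ↦ (n + 1)‼ :=
  strictMono_nat_of_lt_succ doubleFactorial_succ_lt_doubleFactorial_add_two

lemma le_doubleFactorial : ∀ n : ℕ, n ≤ n‼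
  | 0 => Nat.zero_le _
  | n + 1 => strictMono_doubleFactorial_succ.add_le_nat n 0

lemma lt_doubleFactorial {n : ℕ} (hn : 4 ≤ n) : n < n‼ := by
  obtain ⟨m, rfl⟩ := Nat.exists_eq_add_of_le' hn
  have h : m + 4‼ ≤ (m + 4)‼ := strictMono_doubleFactorial_succ.add_le_nat m 3
  exact (Nat.add_lt_add_left (by decide) m).trans_le h

lemma doubleFactorial_add_three_le_pow : ∀ n : ℕ, (n + 3)‼ ≤ (n + 3) ^ (n + 1)
  | 0 => by decide
  | 1 => by decide
  | n + 2 => calc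
    (n + 5)‼ = (n + 5) * (n + 3)‼ := doubleFactorial_add_two (n + 3)
    _ ≤ (n + 5) * (n + 5) ^ (n + 1) := by
      gcongr
      exact (doubleFactorial_add_three_le_pow n).trans (Nat.pow_le_pow_left (by omega) _)
    _ = (n + 5) ^ (n + 2) := (pow_succ' _ _).symm
    _ ≤ (n + 5) ^ (n + 3) := Nat.pow_le_pow_right (by omega) (by omega)

lemma mul_pow_doubleFactorial_le {k n : ℕ} (hk : 3 ≤ k) (hkn : k < n) :
    k * n ^ k‼ ≤ k ^ n‼ := by
  obtain ⟨a, rfl⟩ := Nat.exists_eq_add_of_le' hk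
  obtain ⟨b, rfl⟩ := Nat.exists_eq_add_of_le' (hk.trans hkn.le)
  have hlt : (a + 1)‼ < (b + 1)‼ := strictMono_doubleFactorial_succ (by omega)
  calc (a + 3) * (b + 3) ^ (a + 3)‼
      = (a + 3) * ((b + 3) ^ (a + 3)) ^ (a + 1)‼ := by
        rw [doubleFactorial_add_two, pow_mul]
    _ ≤ (a + 3) ^ (b + 3) * ((a + 3) ^ (b + 3)) ^ (a + 1)‼ :=
        Nat.mul_le_mul (Nat.le_self_pow (by omega) _)
          (Nat.pow_le_pow_left (pow_le_pow_swap_of_three_le hk hkn.le) _)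
    _ = ((a + 3) ^ (b + 3)) ^ ((a + 1)‼ + 1) := (pow_succ' _ _).symm
    _ ≤ ((a + 3) ^ (b + 3)) ^ (b + 1)‼ := Nat.pow_le_pow_right (by positivity) hlt
    _ = (a + 3) ^ (b + 3)‼ := by rw [← pow_mul, ← doubleFactorial_add_two]

lemma mul_doubleFactorial_pow_le {k n : ℕ} (hk : 3 ≤ k) (hkn : k < n) :
    k * k‼ ^ n ≤ k ^ n‼ := by
  obtain ⟨a, rfl⟩ := Nat.exists_eq_add_of_le' hk
  obtain ⟨b, rfl⟩ := Nat.exists_eq_add_of_le' (hk.trans hkn.le)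
  have hlt : a + 1 < (b + 1)‼ := calc
    a + 1 < b + 1 := by omega
    _ ≤ (b + 1)‼ := le_doubleFactorial (b + 1)
  calc (a + 3) * (a + 3)‼ ^ (b + 3)
      ≤ (a + 3) ^ (b + 3) * ((a + 3) ^ (a + 1)) ^ (b + 3) :=
        Nat.mul_le_mul (Nat.le_self_pow (by omega) _)
          (Nat.pow_le_pow_left (doubleFactorial_add_three_le_pow a) _)
    _ = ((a + 3) ^ (b + 3)) ^ (a + 1 + 1) := by rw [pow_right_comm, ← pow_succ']
    _ ≤ ((a + 3) ^ (b + 3)) ^ (b + 1)‼ := Nat.pow_le_pow_right (by positivity) hlt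
    _ = (a + 3) ^ (b + 3)‼ := by rw [← pow_mul, ← doubleFactorial_add_two]

lemma doubleFactorial_pow_add_pow_doubleFactorial_le {k n : ℕ} (hk : 3 ≤ k) (hkn : k < n) :
    k‼ ^ n + n ^ k‼ ≤ k ^ n‼ := by
  refine Nat.le_of_mul_le_mul_left ?_ (zero_lt_two' ℕ)
  calc 2 * (k‼ ^ n + n ^ k‼) ≤ k * (k‼ ^ n + n ^ k‼) := by gcongr; omega
    _ = k * k‼ ^ n + k * n ^ k‼ := mul_add _ _ _
    _ ≤ k ^ n‼ + k ^ n‼ :=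
      Nat.add_le_add (mul_doubleFactorial_pow_le hk hkn) (mul_pow_doubleFactorial_le hk hkn)
    _ = 2 * k ^ n‼ := (two_mul _).symm

lemma pow_add_pow_lt_doubleFactorial_pow_add {k n : ℕ} (hk : 0 < k) (hn : 4 ≤ n) :
    k ^ n + n ^ k < n‼ ^ k + k ^ n‼ := by
  have hlt : n < n‼ := lt_doubleFactorial hn
  rw [add_comm]
  exact Nat.add_lt_add_of_lt_of_le (Nat.pow_lt_pow_left hlt hk.ne')
    (Nat.pow_le_pow_right hk hlt.le)

lemma doubleFactorial_pow_add_pow_doubleFactorial_lt {k n : ℕ} (hk : 0 < k) (hkn : k < n)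
    (hn : 4 ≤ n) : k‼ ^ n + n ^ k‼ < n‼ ^ k + k ^ n‼ := by
  obtain hk₂ | hk₃ := Nat.lt_or_ge k 3
  · have hself : k‼ = k := by interval_cases k <;> rfl
    simpa only [hself] using pow_add_pow_lt_doubleFactorial_pow_add hk hn
  · exact (doubleFactorial_pow_add_pow_doubleFactorial_le hk₃ hkn).trans_lt
      (Nat.lt_add_of_pos_left (Nat.pow_pos (doubleFactorial_pos n)))

lemma le_three_of_doubleFactorial_pow_add_eq {k n : ℕ} (hk : 0 < k) (hkn : k < n)
    (h : n‼ ^ k + k ^ n‼ = k‼ ^ n + n ^ k‼) : n ≤ 3 := by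
  by_contra! hn
  exact (doubleFactorial_pow_add_pow_doubleFactorial_lt hk hkn hn).ne' h

theorem doubleFactorial_sub_pow_doubleFactorial_eq_iff (n k : ℕ) (hn : 0 < n) (hk : 0 < k) :
    ((n‼ : ℤ)) ^ k - (n : ℤ) ^ (k‼) = ((k‼ : ℤ)) ^ n - (k : ℤ) ^ (n‼) ↔
      k = n ∨ (k, n) = (1, 2) ∨ (k, n) = (2, 1) ∨ (k, n) = (1, 3) ∨ (k, n) = (3, 1) ∨
        (k, n) = (2, 3) ∨ (k, n) = (3, 2) := by
  simp only [Prod.mk.injEq]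
  constructor
  · intro h
    have hadd : n‼ ^ k + k ^ n‼ = k‼ ^ n + n ^ k‼ := by
      zify
      linarith
    obtain hkn | hkn | hnk := lt_trichotomy k n
    · have := le_three_of_doubleFactorial_pow_add_eq hk hkn hadd
      omega
    · exact Or.inl hkn
    · have := le_three_of_doubleFactorial_pow_add_eq hn hnk (by omega)
      omega
  · rintro (rfl | ⟨rfl, rfl⟩ | ⟨rfl, rfl⟩ | ⟨rfl, rfl⟩ | ⟨rfl, rfl⟩ | ⟨rfl, rfl⟩ | ⟨rfl, rfl⟩)
    · rfl
    all_goals norm_num [doubleFactorial]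
end

section
/- For all integers n and k with n > k ≥ 3, one has (n‼)^k − n^k > (k‼)^n − k^n. -/
/-!
The inequality is the sum of `n ^ k < k ^ n` and `k‼ ^ n ≤ n‼ ^ k`. The first says that
`x ↦ x ^ (1 / x)` is strictly decreasing on `[e, ∞)`, which comes down to
`log (y / x) < y / x - 1`. The second says that `n ↦ n‼ ^ (1 / n)` is increasing on the positive
integers, which only has to be checked for consecutive integers. There it follows by induction in
steps of two: passing from `n` to `n + 2` requires
`(n + 2) ^ (n + 3) * n‼ ^ 2 ≤ (n + 3) ^ (n + 2) * (n + 1)‼ ^ 2`, which is the product of Bernoulli's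
inequality `2 * (n + 2) ^ (n + 2) ≤ (n + 3) ^ (n + 2)` and the Wallis-type bound
`(n + 2) * n‼ ^ 2 ≤ 2 * (n + 1)‼ ^ 2`.
-/

open Nat

theorem rpow_lt_rpow_swap {x y : ℝ} (hx : Real.exp 1 ≤ x) (hxy : x < y) : y ^ x < x ^ y := by
  have x_pos : 0 < x := (Real.exp_pos 1).trans_le hx
  have y_pos : 0 < y := x_pos.trans hxy
  have one_le_log : 1 ≤ Real.log x := (Real.le_log_iff_exp_le x_pos).2 hx
  have log_div_lt : Real.log (y / x) < y / x - 1 :=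
    Real.log_lt_sub_one_of_pos (div_pos y_pos x_pos) ((one_lt_div x_pos).2 hxy).ne'
  rw [← Real.log_lt_log_iff (Real.rpow_pos_of_pos y_pos x) (Real.rpow_pos_of_pos x_pos y),
    Real.log_rpow y_pos, Real.log_rpow x_pos]
  calc x * Real.log y = x * Real.log x + x * Real.log (y / x) := by
        rw [Real.log_div y_pos.ne' x_pos.ne']; ring
    _ < x * Real.log x + x * (y / x - 1) := by gcongr
    _ = x * Real.log x + (y - x) := by field_simp
    _ ≤ x * Real.log x + (y - x) * Real.log x := by
        gcongr
        exact le_mul_of_one_le_right (sub_nonneg.2 hxy.le) one_le_log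
    _ = y * Real.log x := by ring

theorem pow_lt_pow_swap {k n : ℕ} (hk : 3 ≤ k) (hkn : k < n) : n ^ k < k ^ n := by
  have exp_one_le : Real.exp 1 ≤ k := Real.exp_one_lt_three.le.trans (mod_cast hk)
  exact_mod_cast rpow_lt_rpow_swap exp_one_le (Nat.cast_lt.2 hkn)

theorem pow_le_pow_swap_of_pow_succ_le {M : Type*} [MonoidWithZero M] [LinearOrder M]
    [ZeroLEOneClass M] [PosMulStrictMono M] [MulPosMono M] {a : ℕ → M}
    (ha : ∀ j, 0 ≤ a j) (h : ∀ j, a j ^ (j + 1) ≤ a (j + 1) ^ j) {k n : ℕ} (hkn : k ≤ n) :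
    a k ^ n ≤ a n ^ k := by
  induction n, hkn using Nat.le_induction with
  | base => exact le_rfl
  | succ n hkn ih =>
    obtain rfl | hn := eq_or_ne n 0
    · obtain rfl : k = 0 := Nat.le_zero.1 hkn
      exact h 0
    refine le_of_pow_le_pow_left₀ hn (pow_nonneg (ha _) _) ?_
    calc (a k ^ (n + 1)) ^ n = (a k ^ n) ^ (n + 1) := pow_right_comm _ _ _
      _ ≤ (a n ^ k) ^ (n + 1) := pow_le_pow_left₀ (pow_nonneg (ha k) n) ih _
      _ = (a n ^ (n + 1)) ^ k := pow_right_comm _ _ _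
      _ ≤ (a (n + 1) ^ n) ^ k := pow_le_pow_left₀ (pow_nonneg (ha n) _) (h n) _
      _ = (a (n + 1) ^ k) ^ n := pow_right_comm _ _ _

theorem two_mul_pow_self_le_succ_pow {n : ℕ} (hn : n ≠ 0) : 2 * n ^ n ≤ (n + 1) ^ n :=
  calc 2 * n ^ n = n ^ n + n * n ^ (n - 1) * 1 := by rw [mul_one, mul_pow_sub_one hn, two_mul]
    _ ≤ (n + 1) ^ n := by simpa using pow_add_mul_le_add_pow (a := n) (b := 1) (by simp) (by simp) n

theorem add_two_mul_doubleFactorial_sq_le : ∀ n : ℕ, (n + 2) * n‼ ^ 2 ≤ 2 * (n + 1)‼ ^ 2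
  | 0 => by decide
  | 1 => by decide
  | n + 2 =>
    calc (n + 4) * (n + 2)‼ ^ 2 = (n + 4) * (n + 2) * ((n + 2) * n‼ ^ 2) := by
          rw [doubleFactorial_add_two]; ring
      _ ≤ (n + 3) ^ 2 * (2 * (n + 1)‼ ^ 2) :=
          Nat.mul_le_mul (by nlinarith) (add_two_mul_doubleFactorial_sq_le n)
      _ = 2 * (n + 3)‼ ^ 2 := by
          rw [doubleFactorial_add_two (n + 1)]; ring

theorem doubleFactorial_pow_succ_le : ∀ n : ℕ, n‼ ^ (n + 1) ≤ (n + 1)‼ ^ n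
  | 0 => by decide
  | 1 => by decide
  | n + 2 => by
    have ratio_bound : (n + 2) ^ (n + 3) * n‼ ^ 2 ≤ (n + 3) ^ (n + 2) * (n + 1)‼ ^ 2 :=
      calc (n + 2) ^ (n + 3) * n‼ ^ 2 = (n + 2) ^ (n + 2) * ((n + 2) * n‼ ^ 2) := by ring
        _ ≤ (n + 2) ^ (n + 2) * (2 * (n + 1)‼ ^ 2) := by
            grw [add_two_mul_doubleFactorial_sq_le n]
        _ = 2 * (n + 2) ^ (n + 2) * (n + 1)‼ ^ 2 := by ring
        _ ≤ (n + 3) ^ (n + 2) * (n + 1)‼ ^ 2 := by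
            grw [two_mul_pow_self_le_succ_pow (n + 1).succ_ne_zero]
    calc (n + 2)‼ ^ (n + 3) = (n + 2) ^ (n + 3) * n‼ ^ 2 * n‼ ^ (n + 1) := by
          rw [doubleFactorial_add_two, mul_pow]; ring
      _ ≤ (n + 3) ^ (n + 2) * (n + 1)‼ ^ 2 * (n + 1)‼ ^ n :=
          Nat.mul_le_mul ratio_bound (doubleFactorial_pow_succ_le n)
      _ = (n + 3)‼ ^ (n + 2) := by
          rw [doubleFactorial_add_two (n + 1), mul_pow]; ring

theorem doubleFactorial_pow_le_doubleFactorial_pow {k n : ℕ} (hkn : k ≤ n) : k‼ ^ n ≤ n‼ ^ k :=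
  pow_le_pow_swap_of_pow_succ_le (fun j ↦ Nat.zero_le j‼) doubleFactorial_pow_succ_le hkn

theorem doubleFactorial_sub_gt (n k : ℕ) (hk : 3 ≤ k) (hnk : k < n) :
    ((k‼ : ℤ)) ^ n - (k : ℤ) ^ n < ((n‼ : ℤ)) ^ k - (n : ℤ) ^ k := by
  have doubleFactorial_le : (k‼ : ℤ) ^ n ≤ (n‼ : ℤ) ^ k :=
    mod_cast doubleFactorial_pow_le_doubleFactorial_pow hnk.le
  have pow_lt : (n : ℤ) ^ k < (k : ℤ) ^ n := mod_cast pow_lt_pow_swap hk hnk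
  linarith
end
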